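/- arXiv:2110.05682 — 5 statements merged into one kernel-verified Lean document; each statement's English description precedes it below -/
import Mathlib

section
/- For every integer t ≥ 1 one has 1/√t ≤ Σ_{i=1}^t α_t^i/√i ≤ 2/√t. -/
open Finset

/-- The learning rate `α_t = (H+1)/(H+t)`. -/
noncomputable def lr (H t : ℕ) : ℝ := (H + 1) / (H + t)

/-- The coefficients `α_t^0 = ∏_{j=1}^t (1 - α_j)` and
    `α_t^i = α_i ∏_{j=i+1}^t (1 - α_j)` for `1 ≤ i ≤ t`. -/
noncomputable def acoef (H t i : ℕ) : ℝ :=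
  if i = 0 then ∏ j ∈ Finset.Icc 1 t, (1 - lr H j)
  else lr H i * ∏ j ∈ Finset.Icc (i + 1) t, (1 - lr H j)

theorem S_succ (H t : ℕ) :
    (∑ i ∈ Finset.Icc 1 (t+1), acoef H (t+1) i / Real.sqrt i) =
      (1 - lr H (t+1)) * (∑ i ∈ Finset.Icc 1 t, acoef H t i / Real.sqrt i)
        + lr H (t+1) / Real.sqrt ((t+1 : ℕ) : ℝ) := by
  rw [Finset.sum_Icc_succ_top (by omega), Finset.mul_sum]
  congr 1
  · apply Finset.sum_congr rfl
    intro i hi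
    rw [Finset.mem_Icc] at hi
    have h0 : i ≠ 0 := by omega
    simp only [acoef, h0, if_false]
    rw [Finset.prod_Icc_succ_top (by omega)]
    ring
  · simp [acoef]

theorem stmt1 (H : ℕ) (hH : 1 ≤ H) :
    ∀ t : ℕ, 1 ≤ t →
      1 / Real.sqrt t ≤ (∑ i ∈ Finset.Icc 1 t, acoef H t i / Real.sqrt i) ∧
      (∑ i ∈ Finset.Icc 1 t, acoef H t i / Real.sqrt i) ≤ 2 / Real.sqrt t := by
  intro t ht
  induction t, ht using Nat.le_induction with
  | base => simp [acoef, lr]; rw [div_self (by positivity)]; norm_num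
  | succ t ht ih =>
    obtain ⟨h1, h2⟩ := ih
    rw [S_succ]
    generalize (∑ i ∈ Finset.Icc 1 t, acoef H t i / Real.sqrt i) = S at h1 h2
    have htp : (0:ℝ) < t := by exact_mod_cast ht
    have hHp : (1:ℝ) ≤ H := by exact_mod_cast hH
    have hα : 1 - lr H (t+1) = t / (H + t + 1) := by
      unfold lr; push_cast; field_simp; ring
    have hα' : lr H (t+1) = (H + 1) / (H + t + 1) := by
      unfold lr; push_cast; rw [add_assoc (H:ℝ)]
    rw [hα, hα']
    push_cast
    have ha : 0 < Real.sqrt t := Real.sqrt_pos.2 htp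
    have hb : 0 < Real.sqrt ((t:ℝ)+1) := Real.sqrt_pos.2 (by linarith)
    have ha2 : Real.sqrt t ^ 2 = t := Real.sq_sqrt htp.le
    have hb2 : Real.sqrt ((t:ℝ)+1) ^ 2 = t + 1 := Real.sq_sqrt (by linarith)
    have hab : Real.sqrt t ≤ Real.sqrt ((t:ℝ)+1) := Real.sqrt_le_sqrt (by linarith)
    generalize Real.sqrt ((t:ℝ)+1) = b at *
    generalize Real.sqrt (t:ℝ) = a at *
    have hD : (0:ℝ) < H + t + 1 := by linarith
    constructor
    · have h3 : 1 / b ≤ S := (one_div_le_one_div_of_le ha hab).trans h1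
      calc 1 / b = t / (H + t + 1) * (1 / b) + (H + 1) / (H + t + 1) / b := by
            field_simp; ring
        _ ≤ _ := by gcongr
    · calc (t:ℝ) / (H + t + 1) * S + (H + 1) / (H + t + 1) / b
          ≤ t / (H + t + 1) * (2 / a) + (H + 1) / (H + t + 1) / b := by gcongr
        _ = (2 * a * b + (H + 1)) / ((H + t + 1) * b) := by
            have : (t:ℝ) / (H + t + 1) * (2 / a) = 2 * a / (H + t + 1) := by
              rw [div_mul_div_comm, div_eq_div_iff (by positivity) (by positivity)]
              rw [← ha2]; ring
            rw [this]; field_simp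
        _ ≤ (2 * (H + t + 1)) / ((H + t + 1) * b) := by
            gcongr
            nlinarith [sq_nonneg (a - b)]
        _ = 2 / b := by field_simp
end

section
/- For every integer t ≥ 1 one has max_{1 ≤ i ≤ t} α_t^i ≤ 2H/t and Σ_{i=1}^t (α_t^i)^2 ≤ 2H/t. -/
open Finset

lemma lr_compl (H t : ℕ) : 1 - lr H (t+1) = t / (H + t + 1) := by
  unfold lr
  have : (H:ℝ) + t + 1 ≠ 0 := by positivity
  push_cast
  rw [← add_assoc]
  field_simp
  ring

lemma acoef_succ (H t i : ℕ) (hi : i ∈ Icc 1 t) :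
    acoef H (t+1) i = acoef H t i * (t / (H + t + 1)) := by
  rw [mem_Icc] at hi
  unfold acoef
  rw [if_neg (by omega), if_neg (by omega), prod_Icc_succ_top (by omega), lr_compl, mul_assoc]

lemma acoef_self (H t : ℕ) : acoef H (t+1) (t+1) = (H+1) / (H + t + 1) := by
  unfold acoef lr
  rw [if_neg (by omega), Icc_eq_empty (by omega)]
  push_cast
  simp [add_assoc]

lemma acoef_bd (H t : ℕ) : ∀ i ∈ Icc 1 t, 0 ≤ acoef H t i ∧ acoef H t i ≤ (H+1)/(H+t) := by
  induction t with
  | zero => simp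
  | succ t ih =>
    intro i hi
    rw [mem_Icc] at hi
    push_cast
    rw [← add_assoc]
    by_cases h : i = t + 1
    · subst h
      rw [acoef_self]
      exact ⟨by positivity, le_rfl⟩
    · have hi' : i ∈ Icc 1 t := by rw [mem_Icc]; omega
      obtain ⟨h0, h1⟩ := ih i hi'
      rw [acoef_succ H t i hi']
      have ht : (1:ℝ) ≤ t := by exact_mod_cast (by omega : 1 ≤ t)
      refine ⟨by positivity, ?_⟩
      rw [← mul_div_assoc]
      gcongr
      have hp : (0:ℝ) < H + t := by positivity
      calc acoef H t i * t ≤ (H+1)/(H+t) * t := by gcongr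
        _ ≤ H + 1 := by
          rw [div_mul_eq_mul_div, div_le_iff₀ hp]
          gcongr
          have : (0:ℝ) ≤ H := by positivity
          linarith

lemma acoef_sum (H t : ℕ) : ∑ i ∈ Icc 1 t, acoef H t i ≤ 1 := by
  induction t with
  | zero => simp
  | succ t ih =>
    rw [sum_Icc_succ_top (by omega), acoef_self, sum_congr rfl (acoef_succ H t), ← sum_mul]
    have hp : (0:ℝ) < H + t + 1 := by positivity
    calc _ ≤ 1 * ((t:ℝ) / (H + t + 1)) + (H+1) / (H + t + 1) := by gcongr
      _ = 1 := by field_simp; ring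

theorem stmt2 (H : ℕ) (hH : 1 ≤ H) :
    ∀ t : ℕ, 1 ≤ t →
      (∀ i ∈ Finset.Icc 1 t, acoef H t i ≤ 2 * H / t) ∧
      (∑ i ∈ Finset.Icc 1 t, (acoef H t i) ^ 2) ≤ 2 * H / t := by
  intro t ht
  have hH' : (1:ℝ) ≤ H := by exact_mod_cast hH
  have ht' : (1:ℝ) ≤ t := by exact_mod_cast ht
  have key : ∀ i ∈ Finset.Icc 1 t, acoef H t i ≤ 2 * H / t := by
    intro i hi
    refine (acoef_bd H t i hi).2.trans ?_
    rw [div_le_div_iff₀ (by positivity) (by positivity)]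
    nlinarith [mul_nonneg (sub_nonneg.2 hH') (by positivity : (0:ℝ) ≤ t)]
  refine ⟨key, ?_⟩
  calc _ ≤ ∑ i ∈ Icc 1 t, (2 * H / t : ℝ) * acoef H t i := by
        apply sum_le_sum
        intro i hi
        rw [sq]
        exact mul_le_mul_of_nonneg_right (key i hi) (acoef_bd H t i hi).1
    _ = (2 * H / t : ℝ) * ∑ i ∈ Icc 1 t, acoef H t i := by rw [mul_sum]
    _ ≤ _ := mul_le_of_le_one_right (by positivity) (acoef_sum H t)
end

section
/- For every integer i ≥ 1, the infinite series Σ_{t=i}^∞ α_t^i converges and its sum equals 1 + 1/H. -/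
open Finset

theorem stmt3 (H : ℕ) (hH : 1 ≤ H) :
    ∀ i : ℕ, 1 ≤ i →
      HasSum (fun n : ℕ => acoef H (i + n) i) (1 + 1 / (H : ℝ)) := by
  intro i hi
  have hHr : (1:ℝ) ≤ H := by exact_mod_cast hH
  have hir : (1:ℝ) ≤ i := by exact_mod_cast hi
  have h0 : acoef H (i + 0) i = (H + 1) / (H + i) := by
    have : i ≠ 0 := by omega
    simp [acoef, this, lr]
  have hs : ∀ n : ℕ, acoef H (i + (n + 1)) i
      = acoef H (i + n) i * ((i + n) / (H + i + n + 1)) := by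
    intro n
    have h : i ≠ 0 := by omega
    have hp : (H:ℝ) + i + n + 1 ≠ 0 := by positivity
    have hp2 : (H:ℝ) + (i + n + 1) ≠ 0 := by positivity
    unfold acoef
    rw [if_neg h, if_neg h, ← add_assoc, Finset.prod_Icc_succ_top (by omega), ← mul_assoc]
    congr 1
    unfold lr
    push_cast
    field_simp
    ring
  have hnn : ∀ n : ℕ, 0 ≤ acoef H (i + n) i := by
    intro n
    induction n with
    | zero => rw [h0]; positivity
    | succ n ih => rw [hs]; positivity
  have hsum : ∀ n : ℕ, ∑ k ∈ Finset.range n, acoef H (i + k) i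
      = (1 + 1 / (H:ℝ)) - acoef H (i + n) i * ((H + i + n) / H) := by
    intro n
    induction n with
    | zero =>
      rw [h0]
      simp only [Finset.range_zero, Finset.sum_empty]
      push_cast
      have : (H:ℝ) + i ≠ 0 := by positivity
      field_simp
      ring
    | succ n ih =>
      rw [Finset.sum_range_succ, ih, hs]
      have hp : (H:ℝ) + i + n + 1 ≠ 0 := by positivity
      have hp2 : (H:ℝ) + i + (n + 1) ≠ 0 := by positivity
      push_cast
      field_simp
      ring
  have hb : ∀ n : ℕ, acoef H (i + n) i * ((H + i + n) / H) * (i + n)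
      ≤ (1 + 1 / (H:ℝ)) * i := by
    intro n
    induction n with
    | zero =>
      rw [h0]
      have : (H:ℝ) + i ≠ 0 := by positivity
      apply le_of_eq
      push_cast
      field_simp
      ring
    | succ n ih =>
      refine le_trans ?_ ih
      rw [hs]
      have hp : (H:ℝ) + i + n + 1 ≠ 0 := by positivity
      have e : acoef H (i + n) i * ((i + n) / (H + i + n + 1))
          * ((H + i + ((n + 1 : ℕ) : ℝ)) / H) * (i + ((n + 1 : ℕ) : ℝ))
          = acoef H (i + n) i * ((i + n + 1) / H) * (i + n) := by
        have hp2 : (H:ℝ) + i + (n + 1) ≠ 0 := by positivity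
        push_cast
        field_simp
        ring
      rw [e]
      have := hnn n
      gcongr ?_ * (?_ / _) * _
      linarith
  rw [hasSum_iff_tendsto_nat_of_nonneg hnn]
  simp_rw [hsum]
  have hlim : Filter.Tendsto (fun n : ℕ => acoef H (i + n) i * (((H:ℝ) + i + n) / H))
      Filter.atTop (nhds 0) := by
    refine squeeze_zero (g := fun n : ℕ => ((1 + 1 / (H:ℝ)) * i) / ((i:ℝ) + n)) ?_ ?_ ?_
    · intro n
      have := hnn n
      positivity
    · intro n
      rw [le_div_iff₀ (by positivity)]
      exact hb n
    · exact Filter.Tendsto.const_div_atTop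
        (Filter.tendsto_atTop_add_const_left _ _ tendsto_natCast_atTop_atTop) _
  simpa using hlim.const_sub (1 + 1 / (H:ℝ))
end

section
/- (Pythagorean theorem for Bregman divergence.) Let U ⊆ ℝⁿ be an open convex set, let F : ℝⁿ → ℝ be differentiable on U and convex on U, let X ⊆ U be a convex set, let y ∈ U, and suppose z ∈ X minimizes the function u ↦ D_F(u, y) over X. Then for every x ∈ X, D_F(x, y) − D_F(z, y) ≥ D_F(x, z). -/
open RealInnerProductSpace

/-- The Bregman divergence `D_F(u,v) = F(u) - F(v) - ⟪u - v, ∇F(v)⟫` associated with a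
function `F : ℝⁿ → ℝ`, where `∇F(v)` is the gradient of `F` at `v`. -/
noncomputable def bregman {n : ℕ} (F : EuclideanSpace ℝ (Fin n) → ℝ)
    (u v : EuclideanSpace ℝ (Fin n)) : ℝ :=
  F u - F v - ⟪u - v, gradient F v⟫

/-- Pythagorean theorem for the Bregman divergence. -/
theorem stmt7 {n : ℕ} (U : Set (EuclideanSpace ℝ (Fin n)))
    (hUopen : IsOpen U) (hUconv : Convex ℝ U)
    (F : EuclideanSpace ℝ (Fin n) → ℝ)
    (hFdiff : ∀ x ∈ U, DifferentiableAt ℝ F x) (hFconv : ConvexOn ℝ U F)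
    (X : Set (EuclideanSpace ℝ (Fin n))) (hXU : X ⊆ U) (hXconv : Convex ℝ X)
    (y : EuclideanSpace ℝ (Fin n)) (hy : y ∈ U)
    (z : EuclideanSpace ℝ (Fin n)) (hz : z ∈ X)
    (hzmin : ∀ u ∈ X, bregman F z y ≤ bregman F u y) :
    ∀ x ∈ X, bregman F x y - bregman F z y ≥ bregman F x z := by
  intro x hx
  have hF := (hFdiff z (hXU hz)).hasGradientAt.hasFDerivAt
  have hG : HasFDerivAt (fun u => F u - innerSL ℝ (gradient F y) u) _ z :=
    hF.sub (innerSL ℝ (gradient F y)).hasFDerivAt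
  have hmin : IsLocalMinOn (fun u => F u - innerSL ℝ (gradient F y) u) X z := by
    refine IsMinOn.localize ?_
    intro u hu
    have h := hzmin u hu
    simp only [bregman, inner_sub_left] at h
    simp only [Set.mem_ofPred_eq, innerSL_apply_apply]
    rw [real_inner_comm z, real_inner_comm u]
    linarith
  have h := hmin.hasFDerivWithinAt_nonneg hG.hasFDerivWithinAt
    (sub_mem_posTangentConeAt_of_segment_subset (hXconv.segment_subset hz hx))
  simp only [sub_apply, InnerProductSpace.toDual_apply_apply,
    innerSL_apply_apply] at h
  rw [real_inner_comm, real_inner_comm (x - z) (gradient F y)] at h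
  simp only [bregman, inner_sub_left] at h ⊢
  linarith
end

section
/- Let θ̃ ∈ ℝ^A have strictly positive entries, let θ₁ ∈ Δ(A) have strictly positive entries, let θ' ∈ Δ(A) minimize the map u ↦ D_F(u, θ̃) over Δ(A), let β ∈ (0, 1], and set θ⁺ = β·θ' + (1 − β)·θ₁. Then for every θ ∈ Δ(A): D_F(θ, θ̃) ≥ (1/β)·D_F(θ, θ⁺) − ((1 − β)/β)·D_F(θ, θ₁) + D_F(θ', θ̃). -/
open Finset Real

/-- The Bregman divergence of the unnormalized negentropy regularizer
`F(θ) = Σ_a (θ a * log (θ a) - θ a)`, namely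
`D_F(u,v) = Σ_a u a * log (u a / v a) - Σ_a u a + Σ_a v a`
(extended to nonnegative `u` by the convention `0 * log 0 = 0`,
which holds automatically since `Real.log 0 = 0`). -/
noncomputable def DF {A : ℕ} (u v : Fin A → ℝ) : ℝ :=
  (∑ a, u a * Real.log (u a / v a)) - (∑ a, u a) + ∑ a, v a

/-- The probability simplex `Δ(A)`. -/
def simplex (A : ℕ) : Set (Fin A → ℝ) :=
  {θ | (∀ a, 0 ≤ θ a) ∧ (∑ a, θ a) = 1}

lemma aux_term (u v : ℝ) (hv : 0 < v) :
    u * Real.log (u / v) - u + v = v * InformationTheory.klFun (u / v) := by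
  unfold InformationTheory.klFun
  field_simp
  ring

lemma DF_eq_kl {A : ℕ} (u v : Fin A → ℝ) (hv : ∀ a, 0 < v a) :
    DF u v = ∑ a, v a * InformationTheory.klFun (u a / v a) := by
  unfold DF
  rw [← Finset.sum_sub_distrib, ← Finset.sum_add_distrib]
  exact Finset.sum_congr rfl fun a _ => aux_term _ _ (hv a)

lemma DF_scale {A : ℕ} (u v : Fin A → ℝ) (Z : ℝ) (hZ : 0 < Z) (hs : ∑ a, v a = Z)
    (hv : ∀ a, 0 < v a) (hu : u ∈ simplex A) :
    DF u v = DF u (fun a => v a / Z) - Real.log Z - 1 + Z := by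
  unfold DF
  have h1 : ∑ a, u a * Real.log (u a / (v a / Z))
      = ∑ a, u a * Real.log (u a / v a) + Real.log Z := by
    rw [← one_mul (Real.log Z), ← hu.2, Finset.sum_mul, ← Finset.sum_add_distrib]
    refine Finset.sum_congr rfl fun a _ => ?_
    rcases eq_or_ne (u a) 0 with h | h
    · simp [h]
    · have := (hv a).ne'
      rw [← mul_add, ← Real.log_mul (by positivity) hZ.ne']
      congr 2
      field_simp
  have h2 : ∑ a, v a / Z = 1 := by
    rw [← Finset.sum_div, hs, div_self hZ.ne']
  rw [h1, h2, hs]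
  ring

lemma DF_convex {A : ℕ} (u p q : Fin A → ℝ) (β : ℝ) (hβ0 : 0 < β) (hβ1 : β ≤ 1)
    (hu : ∀ a, 0 ≤ u a) (hp : ∀ a, 0 < p a) (hq : ∀ a, 0 < q a) :
    DF u (β • p + (1 - β) • q) ≤ β * DF u p + (1 - β) * DF u q := by
  unfold DF
  have key : ∑ a, u a * Real.log (u a / (β • p + (1 - β) • q) a) ≤
      β * ∑ a, u a * Real.log (u a / p a) + (1 - β) * ∑ a, u a * Real.log (u a / q a) := by
    rw [Finset.mul_sum, Finset.mul_sum, ← Finset.sum_add_distrib]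
    refine Finset.sum_le_sum fun a _ => ?_
    rcases eq_or_ne (u a) 0 with h | h
    · simp [h]
    · have hc := strictConcaveOn_log_Ioi.concaveOn.2 (Set.mem_Ioi.2 (hp a)) (Set.mem_Ioi.2 (hq a))
        hβ0.le (sub_nonneg.2 hβ1) (by ring)
      have hm : 0 < β * p a + (1 - β) * q a := by
        have := mul_pos hβ0 (hp a)
        have := mul_nonneg (sub_nonneg.2 hβ1) (hq a).le
        linarith
      simp only [smul_eq_mul, Pi.add_apply, Pi.smul_apply] at hc ⊢
      rw [Real.log_div h hm.ne', Real.log_div h (hp a).ne', Real.log_div h (hq a).ne']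
      have := mul_le_mul_of_nonneg_left hc (hu a)
      linarith
  have e : ∑ a, (β • p + (1 - β) • q) a = β * ∑ a, p a + (1 - β) * ∑ a, q a := by
    simp [Finset.sum_add_distrib, Finset.mul_sum]
  rw [e]
  linarith

theorem stmt9 (A : ℕ) (hA : 1 ≤ A) (θt θ₁ θ' : Fin A → ℝ) (β : ℝ)
    (hθt : ∀ a, 0 < θt a) (hθ₁ : θ₁ ∈ simplex A) (hθ₁pos : ∀ a, 0 < θ₁ a)
    (hθ' : θ' ∈ simplex A) (hθ'min : ∀ u ∈ simplex A, DF θ' θt ≤ DF u θt)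
    (hβ0 : 0 < β) (hβ1 : β ≤ 1)
    (θplus : Fin A → ℝ) (hθplus : θplus = β • θ' + (1 - β) • θ₁) :
    ∀ θ ∈ simplex A,
      DF θ θt ≥ (1 / β) * DF θ θplus - ((1 - β) / β) * DF θ θ₁ + DF θ' θt := by
  intro θ hθ
  set Z := ∑ a, θt a with hZ
  have : Nonempty (Fin A) := ⟨⟨0, hA⟩⟩
  have hZpos : 0 < Z := Finset.sum_pos (fun a _ => hθt a) Finset.univ_nonempty
  have hqpos : ∀ a, 0 < θt a / Z := fun a => div_pos (hθt a) hZpos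
  have hq : (fun a => θt a / Z) ∈ simplex A :=
    ⟨fun a => (hqpos a).le, by rw [← Finset.sum_div, ← hZ, div_self hZpos.ne']⟩
  have hmin := hθ'min _ hq
  have s1 := DF_scale θ' θt Z hZpos hZ.symm hθt hθ'
  have s2 := DF_scale _ θt Z hZpos hZ.symm hθt hq
  have s3 := DF_scale θ θt Z hZpos hZ.symm hθt hθ
  have z : DF (fun a => θt a / Z) (fun a => θt a / Z) = 0 := by
    rw [DF_eq_kl _ _ hqpos]
    refine Finset.sum_eq_zero fun a _ => ?_
    rw [div_self (hqpos a).ne']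
    simp [InformationTheory.klFun]
  have hnn : ∀ a ∈ (Finset.univ : Finset (Fin A)),
      0 ≤ θt a / Z * InformationTheory.klFun (θ' a / (θt a / Z)) := fun a _ =>
    mul_nonneg (hqpos a).le
      (InformationTheory.klFun_nonneg (div_nonneg (hθ'.1 a) (hqpos a).le))
  have k := DF_eq_kl θ' _ hqpos
  have hsum0 : ∑ a, θt a / Z * InformationTheory.klFun (θ' a / (θt a / Z)) = 0 :=
    le_antisymm (by linarith) (Finset.sum_nonneg hnn)
  have heq : θ' = fun a => θt a / Z := by
    funext a
    have h0 := (Finset.sum_eq_zero_iff_of_nonneg hnn).1 hsum0 a (Finset.mem_univ a)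
    have h1 := (mul_eq_zero.1 h0).resolve_left (hqpos a).ne'
    rw [InformationTheory.klFun_eq_zero_iff (div_nonneg (hθ'.1 a) (hqpos a).le)] at h1
    exact (div_eq_one_iff_eq (hqpos a).ne').1 h1
  have hc := DF_convex θ θ' θ₁ β hβ0 hβ1 hθ.1 (fun a => by rw [heq]; exact hqpos a) hθ₁pos
  rw [← hθplus] at hc
  rw [← heq] at s1 s3 k
  rw [← heq] at z
  have hd : (1 / β) * DF θ θplus - ((1 - β) / β) * DF θ θ₁ ≤ DF θ θ' := by
    have : (1 / β) * DF θ θplus - ((1 - β) / β) * DF θ θ₁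
        = (DF θ θplus - (1 - β) * DF θ θ₁) / β := by ring
    rw [this, div_le_iff₀ hβ0]
    linarith
  linarith
end
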